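/- (Conditional decomposition underlying Proposition 1.) Suppose Assumption DID holds for each path d in {(1,1),(0,1),(1,0)} relative to d' = (0,0), and P(D = e | X) > 0 a.s. for every e in {0,1}^2. Then, a.s., E[ΔY | D2 = 1, X] − E[ΔY | D2 = 0, X] = E[Y2(1,1) − Y2(0,0) | D = (1,1), X] · P(D1 = 1 | D2 = 1, X) + E[Y2(0,1) − Y2(0,0) | D = (0,1), X] · P(D1 = 0 | D2 = 1, X) − E[Y2(1,0) − Y2(0,0) | D = (1,0), X] · P(D1 = 1 | D2 = 0, X). -/

import Mathlib

open MeasureTheory Set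
open scoped Classical

noncomputable section

namespace DIDMissing

variable {Ω : Type*} {𝓧 : Type*}

/-- Real-valued indicator of a set. -/
def ind (A : Set Ω) : Ω → ℝ := A.indicator fun _ => (1 : ℝ)

/-- All treatment paths `{0,1}²` (coded as reals). -/
def allPaths : Set (ℝ × ℝ) := {(0, 0), (0, 1), (1, 0), (1, 1)}

/-- The three treated paths `{(1,1), (0,1), (1,0)}`. -/
def threePaths : Set (ℝ × ℝ) := {(1, 1), (0, 1), (1, 0)}

/-- The event `{D = d}` for a treatment path `d = (d₁, d₂)`. -/
def evD (D1 D2 : Ω → ℝ) (d : ℝ × ℝ) : Set Ω := {ω | D1 ω = d.1 ∧ D2 ω = d.2}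

/-- The event `{D₂ = b}`. -/
def evD2 (D2 : Ω → ℝ) (b : ℝ) : Set Ω := {ω | D2 ω = b}

/-- `g` is a (measurable-in-the-covariate) version of the conditional mean `E[Z ∣ A, X]`:
for every bounded measurable `h`, `E[1_A · Z · h(X)] = E[1_A · g(X) · h(X)]`. -/
def IsCondMeanGiven [MeasurableSpace Ω] [MeasurableSpace 𝓧] (P : Measure Ω) (X : Ω → 𝓧)
    (A : Set Ω) (Z : Ω → ℝ) (g : 𝓧 → ℝ) : Prop :=
  Measurable g ∧
    ∀ h : 𝓧 → ℝ, Measurable h → (∃ C, ∀ x, |h x| ≤ C) →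
      ∫ ω, ind A ω * Z ω * h (X ω) ∂P = ∫ ω, ind A ω * g (X ω) * h (X ω) ∂P

/-- Assumption DID for a path `d` relative to `d' = (0,0)`:
(i) no anticipation, `E[Y₀(d) ∣ D = d, X] = E[Y₀(0,0) ∣ D = d, X]` a.s., stated in the
version-free integral form; and (ii) conditional parallel trends, stated as the existence
of a common version of `E[Y₂(0,0) − Y₀(0,0) ∣ X]` and `E[Y₂(0,0) − Y₀(0,0) ∣ D = d, X]`. -/
def DID [MeasurableSpace Ω] [MeasurableSpace 𝓧] (P : Measure Ω) (X : Ω → 𝓧)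
    (D1 D2 : Ω → ℝ) (Y0p Y2p : ℝ × ℝ → Ω → ℝ) (d : ℝ × ℝ) : Prop :=
  (∀ h : 𝓧 → ℝ, Measurable h → (∃ C, ∀ x, |h x| ≤ C) →
      ∫ ω, ind (evD D1 D2 d) ω * Y0p d ω * h (X ω) ∂P
        = ∫ ω, ind (evD D1 D2 d) ω * Y0p (0, 0) ω * h (X ω) ∂P) ∧
  (∃ tr : 𝓧 → ℝ,
      IsCondMeanGiven P X Set.univ (fun ω => Y2p (0, 0) ω - Y0p (0, 0) ω) tr ∧
      IsCondMeanGiven P X (evD D1 D2 d) (fun ω => Y2p (0, 0) ω - Y0p (0, 0) ω) tr)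

/-- Assumption MAR: `S ⟂ (D₁, ΔY) ∣ (D₂, X)`, where `q d₂` is a version of the
missing-data probability `P(S = 1 ∣ D₂ = d₂, X)`, which is `(0,1]`-valued a.s. -/
def MAR [MeasurableSpace Ω] [MeasurableSpace 𝓧] (P : Measure Ω) (X : Ω → 𝓧)
    (D1 D2 S Y0 Y2 : Ω → ℝ) (q : ℝ → 𝓧 → ℝ) : Prop :=
  (∀ d2 ∈ ({0, 1} : Set ℝ), IsCondMeanGiven P X (evD2 D2 d2) S (q d2)) ∧
  (∀ d2 ∈ ({0, 1} : Set ℝ), ∀ᵐ ω ∂P, 0 < q d2 (X ω) ∧ q d2 (X ω) ≤ 1) ∧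
  (∀ d2 ∈ ({0, 1} : Set ℝ), ∀ f : ℝ × ℝ → ℝ, Measurable f → (∃ C, ∀ p, |f p| ≤ C) →
      ∀ h : 𝓧 → ℝ, Measurable h → (∃ C, ∀ x, |h x| ≤ C) →
        ∫ ω, ind (evD2 D2 d2) ω * S ω * f (D1 ω, Y2 ω - Y0 ω) * h (X ω) ∂P
          = ∫ ω, ind (evD2 D2 d2) ω * q d2 (X ω) * f (D1 ω, Y2 ω - Y0 ω) * h (X ω) ∂P)

/-- The path-dependent ATT `τ_{d,(0,0)} = E[Y₂(d) − Y₂(0,0) ∣ D = d]`. -/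
def tau [MeasurableSpace Ω] (P : Measure Ω) (D1 D2 : Ω → ℝ)
    (Y2p : ℝ × ℝ → Ω → ℝ) (d : ℝ × ℝ) : ℝ :=
  (P (evD D1 D2 d)).toReal⁻¹ * ∫ ω in evD D1 D2 d, (Y2p d ω - Y2p (0, 0) ω) ∂P

/-!
Write `T = E[Y₂(0,0) − Y₀(0,0) ∣ X]`. Parallel trends say that `T` is also the trend given
`D = d, X` for the three treated paths; subtracting these from the trend of the whole population
shows the same for the control path. With no anticipation, `T` is therefore the mean of the
untreated evolution `Y₂(0,0) − Y₀` on every `{D = d}`, hence on both `{D₂ = 1}` and `{D₂ = 0}`, and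
it cancels in the difference. The remainder `Y₂ − Y₂(0,0)` vanishes on `{D = (0,0)}` and is averaged
over the other paths by the tower rule.

Conditional means are handled without division, in the form `E[1_A Z ∣ X] = P(A ∣ X) · g`; a
conditional probability is cancelled only at the end, on the events `{D₂ = b}`.
-/

section Indicator

lemma ind_mul_eq_indicator (A : Set Ω) (Z : Ω → ℝ) : ind A * Z = A.indicator Z := by
  ext ω
  by_cases h : ω ∈ A <;> simp [ind, h]

lemma ind_inter (A B : Set Ω) : ind (A ∩ B) = ind A * ind B :=
  Set.inter_indicator_one

lemma ind_union_of_disjoint {A B : Set Ω} (h : Disjoint A B) : ind (A ∪ B) = ind A + ind B :=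
  Set.indicator_union_of_disjoint h _

lemma ind_sdiff {A B : Set Ω} (h : B ⊆ A) : ind (A \ B) = ind A - ind B :=
  Set.indicator_sdiff h _

variable {m m₀ : MeasurableSpace Ω} {P : Measure Ω} {A : Set Ω} {Z : Ω → ℝ}

lemma integrable_ind [IsFiniteMeasure P] (hA : MeasurableSet A) : Integrable (ind A) P :=
  (integrable_const 1).indicator hA

lemma integrable_ind_mul (hA : MeasurableSet A) (hZ : Integrable Z P) :
    Integrable (ind A * Z) P :=
  ind_mul_eq_indicator A Z ▸ hZ.indicator hA

lemma condExp_ind_univ [IsFiniteMeasure P] (hm : m ≤ m₀) : P[ind univ | m] = 1 := by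
  rw [show ind (univ : Set Ω) = fun _ ↦ 1 from Set.indicator_univ _, condExp_const hm]
  rfl

end Indicator

/-- `g` is a version of the conditional mean `E[Z ∣ A, m]` of `Z` given the event `A` and the
σ-algebra `m`. The defining relation `g = E[1_A Z ∣ m] / P(A ∣ m)` is stated without division, so
`g` is unconstrained where `P(A ∣ m) = 0`; measurability of `g` is not part of the definition. -/
def IsCondMeanOn [MeasurableSpace Ω] (P : Measure Ω) (m : MeasurableSpace Ω)
    (A : Set Ω) (Z g : Ω → ℝ) : Prop :=
  P[ind A * Z | m] =ᵐ[P] P[ind A | m] * g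

namespace IsCondMeanOn

variable {m m₀ : MeasurableSpace Ω} {P : Measure Ω} {A B : Set Ω} {Z Z' g g' p : Ω → ℝ}

lemma congr (h : IsCondMeanOn P m A Z g) (hZ : EqOn Z Z' A) : IsCondMeanOn P m A Z' g := by
  unfold IsCondMeanOn at h ⊢
  rwa [ind_mul_eq_indicator, ← Set.indicator_congr hZ, ← ind_mul_eq_indicator]

lemma congr_ae (h : IsCondMeanOn P m A Z g) (hg : g =ᵐ[P] g') : IsCondMeanOn P m A Z g' :=
  h.trans (.mul .rfl hg)

lemma add (h : IsCondMeanOn P m A Z g) (h' : IsCondMeanOn P m A Z' g') (hA : MeasurableSet A)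
    (hZ : Integrable Z P) (hZ' : Integrable Z' P) : IsCondMeanOn P m A (Z + Z') (g + g') := by
  unfold IsCondMeanOn
  rw [mul_add, mul_add]
  exact (condExp_add (integrable_ind_mul hA hZ) (integrable_ind_mul hA hZ') m).trans
    (Filter.EventuallyEq.add h h')

lemma tower (h : IsCondMeanOn P m (A ∩ B) Z g) (hp : IsCondMeanOn P m B (ind A) p) :
    IsCondMeanOn P m B (ind A * Z) (p * g) := by
  unfold IsCondMeanOn at h hp ⊢
  rw [inter_comm, ind_inter, mul_assoc] at h
  rw [← mul_assoc (P[ind B | m])]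
  exact h.trans (hp.mul .rfl)

lemma ae_eq_of_pos (h : IsCondMeanOn P m A Z g) (h' : IsCondMeanOn P m A Z g')
    (hpos : ∀ᵐ ω ∂P, 0 < P[ind A | m] ω) : g =ᵐ[P] g' := by
  filter_upwards [h.symm.trans h', hpos] with ω hω hposω
  exact mul_left_cancel₀ hposω.ne' hω

variable [IsFiniteMeasure P]

lemma univ_condExp (hm : m ≤ m₀) (Z : Ω → ℝ) : IsCondMeanOn P m univ Z P[Z | m] := by
  rw [IsCondMeanOn, condExp_ind_univ hm, ind_mul_eq_indicator, indicator_univ, one_mul]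

lemma union (h : IsCondMeanOn P m A Z g) (h' : IsCondMeanOn P m B Z g) (hAB : Disjoint A B)
    (hA : MeasurableSet A) (hB : MeasurableSet B) (hZ : Integrable Z P) :
    IsCondMeanOn P m (A ∪ B) Z g := by
  unfold IsCondMeanOn
  rw [ind_union_of_disjoint hAB, add_mul]
  filter_upwards [condExp_add (integrable_ind_mul hA hZ) (integrable_ind_mul hB hZ) m,
    condExp_add (integrable_ind hA) (integrable_ind hB) m, h, h'] with ω hsumZ hsum hω hω'
  simp only [Pi.add_apply, Pi.mul_apply] at *
  rw [hsumZ, hsum, hω, hω', add_mul]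

lemma sdiff (h : IsCondMeanOn P m A Z g) (h' : IsCondMeanOn P m B Z g) (hBA : B ⊆ A)
    (hA : MeasurableSet A) (hB : MeasurableSet B) (hZ : Integrable Z P) :
    IsCondMeanOn P m (A \ B) Z g := by
  unfold IsCondMeanOn
  rw [ind_sdiff hBA, sub_mul]
  filter_upwards [condExp_sub (integrable_ind_mul hA hZ) (integrable_ind_mul hB hZ) m,
    condExp_sub (integrable_ind hA) (integrable_ind hB) m, h, h'] with ω hsubZ hsub hω hω'
  simp only [Pi.sub_apply, Pi.mul_apply] at *
  rw [hsubZ, hsub, hω, hω', sub_mul]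

end IsCondMeanOn

section Covariate

variable [MeasurableSpace Ω] [m𝓧 : MeasurableSpace 𝓧] {P : Measure Ω} {X : Ω → 𝓧} {A : Set Ω}
  {Z : Ω → ℝ} {g : 𝓧 → ℝ}

lemma condExp_mul_comp_of_bounded (hX : Measurable X) {U : Ω → ℝ} (hU : Integrable U P)
    {k : 𝓧 → ℝ} (hk : Measurable k) {C : ℝ} (hC : ∀ x, |k x| ≤ C) :
    P[U * k ∘ X | m𝓧.comap X] =ᵐ[P] P[U | m𝓧.comap X] * k ∘ X :=
  condExp_mul_of_stronglyMeasurable_right (hk.comp (comap_measurable X)).stronglyMeasurable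
    (hU.mul_bdd (hk.comp hX).aestronglyMeasurable (ae_of_all _ fun ω ↦ hC (X ω))) hU

variable [IsFiniteMeasure P]

lemma condExp_comap_ae_eq_of_forall_integral_mul_eq (hX : Measurable X) {U V : Ω → ℝ}
    (hU : Integrable U P) (hV : Integrable V P)
    (h : ∀ k : 𝓧 → ℝ, Measurable k → (∃ C, ∀ x, |k x| ≤ C) →
      ∫ ω, U ω * k (X ω) ∂P = ∫ ω, V ω * k (X ω) ∂P) :
    P[U | m𝓧.comap X] =ᵐ[P] P[V | m𝓧.comap X] := by
  refine ae_eq_condExp_of_forall_setIntegral_eq hX.comap_le hV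
    (fun _ _ _ ↦ integrable_condExp.integrableOn) ?_
    stronglyMeasurable_condExp.aestronglyMeasurable
  rintro _ ⟨t, ht, rfl⟩ -
  have setIntegral_eq (W : Ω → ℝ) :
      ∫ ω in X ⁻¹' t, W ω ∂P = ∫ ω, W ω * t.indicator 1 (X ω) ∂P := by
    rw [← integral_indicator (hX ht)]
    congr with ω
    by_cases hω : X ω ∈ t <;> simp [hω]
  rw [setIntegral_condExp hX.comap_le hU ⟨t, ht, rfl⟩, setIntegral_eq, setIntegral_eq]
  exact h _ (measurable_one.indicator ht)
    ⟨1, fun x ↦ by by_cases hx : x ∈ t <;> simp [hx]⟩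

lemma IsCondMeanGiven.condExp_mul_comp (h : IsCondMeanGiven P X A Z g) (hX : Measurable X)
    (hA : MeasurableSet A) (hZ : Integrable Z P) {k : 𝓧 → ℝ} (hk : Measurable k)
    {C C' : ℝ} (hC : ∀ x, |k x| ≤ C) (hC' : ∀ x, |(g * k) x| ≤ C') :
    P[ind A * Z | m𝓧.comap X] * k ∘ X =ᵐ[P] P[ind A | m𝓧.comap X] * (g * k) ∘ X := by
  have hgk : Measurable (g * k) := h.1.mul hk
  have hU : Integrable (ind A * Z * k ∘ X) P :=
    (integrable_ind_mul hA hZ).mul_bdd (hk.comp hX).aestronglyMeasurable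
      (ae_of_all _ fun ω ↦ hC (X ω))
  have hV : Integrable (ind A * (g * k) ∘ X) P :=
    (integrable_ind hA).mul_bdd (hgk.comp hX).aestronglyMeasurable
      (ae_of_all _ fun ω ↦ hC' (X ω))
  have htest : ∀ l : 𝓧 → ℝ, Measurable l → (∃ K, ∀ x, |l x| ≤ K) →
      ∫ ω, (ind A * Z * k ∘ X) ω * l (X ω) ∂P
        = ∫ ω, (ind A * (g * k) ∘ X) ω * l (X ω) ∂P := by
    rintro l hl ⟨K, hK⟩
    have hkl : ∀ x, |k x * l x| ≤ C * K := fun x ↦ by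
      rw [abs_mul]
      exact mul_le_mul (hC x) (hK x) (abs_nonneg _) ((abs_nonneg _).trans (hC x))
    simpa only [Pi.mul_apply, Function.comp_apply, mul_assoc]
      using h.2 (fun x ↦ k x * l x) (hk.mul hl) ⟨C * K, hkl⟩
  calc P[ind A * Z | m𝓧.comap X] * k ∘ X
      =ᵐ[P] P[ind A * Z * k ∘ X | m𝓧.comap X] :=
        (condExp_mul_comp_of_bounded hX (integrable_ind_mul hA hZ) hk hC).symm
    _ =ᵐ[P] P[ind A * (g * k) ∘ X | m𝓧.comap X] :=
        condExp_comap_ae_eq_of_forall_integral_mul_eq hX hU hV htest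
    _ =ᵐ[P] P[ind A | m𝓧.comap X] * (g * k) ∘ X :=
        condExp_mul_comp_of_bounded hX (integrable_ind hA) hgk hC'

-- `g ∘ X` is not known to be integrable on `A`, so the identity is proved on each `{|g(X)| ≤ n}`.
lemma IsCondMeanGiven.isCondMeanOn (h : IsCondMeanGiven P X A Z g) (hX : Measurable X)
    (hA : MeasurableSet A) (hZ : Integrable Z P) :
    IsCondMeanOn P (m𝓧.comap X) A Z (g ∘ X) := by
  let k (n : ℕ) : 𝓧 → ℝ := {x | |g x| ≤ n}.indicator 1
  have hk (n : ℕ) : Measurable (k n) :=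
    measurable_one.indicator (measurableSet_le h.1.abs measurable_const)
  have hk_le (n : ℕ) (x : 𝓧) : |k n x| ≤ 1 := by
    by_cases hx : |g x| ≤ n <;> simp [k, hx]
  have hgk_le (n : ℕ) (x : 𝓧) : |(g * k n) x| ≤ n := by
    by_cases hx : |g x| ≤ n <;> simp [k, hx]
  have htrunc := ae_all_iff.2 fun n ↦ h.condExp_mul_comp hX hA hZ (hk n) (hk_le n) (hgk_le n)
  filter_upwards [htrunc] with ω hω
  obtain ⟨n, hn⟩ := exists_nat_ge |g (X ω)|
  simpa [k, hn] using hω n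

lemma IsCondMeanGiven.condExp_ae_eq (h : IsCondMeanGiven P X univ Z g) (hX : Measurable X)
    (hZ : Integrable Z P) : P[Z | m𝓧.comap X] =ᵐ[P] g ∘ X := by
  refine (IsCondMeanOn.univ_condExp hX.comap_le Z).ae_eq_of_pos
    (h.isCondMeanOn hX .univ hZ) (ae_of_all _ fun ω ↦ ?_)
  rw [condExp_ind_univ hX.comap_le, Pi.one_apply]
  exact one_pos

lemma IsCondMeanGiven.ae_eq_of_isCondMeanOn_add {U V W s t : Ω → ℝ}
    (hg : IsCondMeanGiven P X A (U - W) g) (hX : Measurable X) (hA : MeasurableSet A)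
    (hpos : ∀ᵐ ω ∂P, 0 < P[ind A | m𝓧.comap X] ω)
    (hUV : IsCondMeanOn P (m𝓧.comap X) A (U - V) s)
    (hVW : IsCondMeanOn P (m𝓧.comap X) A (V - W) t)
    (hU : Integrable U P) (hV : Integrable V P) (hW : Integrable W P) :
    g ∘ X =ᵐ[P] s + t := by
  have hUW := hUV.add hVW hA (hU.sub hV) (hV.sub hW)
  rw [sub_add_sub_cancel] at hUW
  exact (hg.isCondMeanOn hX hA (hU.sub hW)).ae_eq_of_pos hUW hpos

lemma condExp_ind_pos_of_subset (hX : Measurable X) {B : Set Ω} (hAB : A ⊆ B)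
    (hA : MeasurableSet A) (hB : MeasurableSet B) (h : IsCondMeanGiven P X univ (ind A) g)
    (hg : ∀ᵐ ω ∂P, 0 < g (X ω)) : ∀ᵐ ω ∂P, 0 < P[ind B | m𝓧.comap X] ω := by
  have hle : ind A ≤ ind B :=
    Set.indicator_le_indicator_of_subset hAB fun _ ↦ zero_le_one
  filter_upwards [h.condExp_ae_eq hX (integrable_ind hA), hg,
    condExp_mono (integrable_ind hA) (integrable_ind hB) (ae_of_all P hle)] with ω hω hgω hleω
  exact (hgω.trans_eq hω.symm).trans_le hleω

end Covariate

section TreatmentPaths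

variable {D1 D2 : Ω → ℝ}

lemma evD2_eq_union (hD1v : ∀ ω, D1 ω = 0 ∨ D1 ω = 1) (b : ℝ) :
    evD2 D2 b = evD D1 D2 (1, b) ∪ evD D1 D2 (0, b) := by
  ext ω
  rcases hD1v ω with h | h <;> simp [evD, evD2, h]

lemma zero_mk_mem_allPaths {b : ℝ} (hb : b ∈ ({0, 1} : Set ℝ)) : (0, b) ∈ allPaths := by
  rcases hb with rfl | rfl <;> simp [allPaths]

lemma one_mk_mem_allPaths {b : ℝ} (hb : b ∈ ({0, 1} : Set ℝ)) : (1, b) ∈ allPaths := by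
  rcases hb with rfl | rfl <;> simp [allPaths]

lemma disjoint_evD {d e : ℝ × ℝ} (hde : d ≠ e) : Disjoint (evD D1 D2 d) (evD D1 D2 e) :=
  Set.disjoint_left.2 fun _ hd he ↦
    hde (Prod.ext (hd.1.symm.trans he.1) (hd.2.symm.trans he.2))

lemma evD2_zero_eq_sdiff (hD2v : ∀ ω, D2 ω = 0 ∨ D2 ω = 1) :
    evD2 D2 0 = univ \ evD2 D2 1 := by
  ext ω
  rcases hD2v ω with h | h <;> simp [evD2, h]

lemma evD_zero_eq_sdiff (hD1v : ∀ ω, D1 ω = 0 ∨ D1 ω = 1) (b : ℝ) :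
    evD D1 D2 (0, b) = evD2 D2 b \ evD D1 D2 (1, b) := by
  rw [evD2_eq_union hD1v, union_sdiff_cancel_left (disjoint_evD (by simp)).le_bot]

variable [MeasurableSpace Ω]

lemma measurableSet_evD2 (hD2 : Measurable D2) (b : ℝ) : MeasurableSet (evD2 D2 b) :=
  hD2 (measurableSet_singleton b)

lemma measurableSet_evD (hD1 : Measurable D1) (hD2 : Measurable D2) (d : ℝ × ℝ) :
    MeasurableSet (evD D1 D2 d) :=
  (hD1 (measurableSet_singleton d.1)).inter (measurableSet_evD2 hD2 d.2)

end TreatmentPaths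

section DifferenceInDifferences

variable [MeasurableSpace Ω] [m𝓧 : MeasurableSpace 𝓧] {P : Measure Ω} [IsFiniteMeasure P]
  {X : Ω → 𝓧} {Y0 Y2 D1 D2 : Ω → ℝ} {Y0p Y2p : ℝ × ℝ → Ω → ℝ} {d : ℝ × ℝ}

lemma condExp_ind_evD2_pos (hX : Measurable X) (hD1 : Measurable D1) (hD2 : Measurable D2)
    {q : ℝ × ℝ → 𝓧 → ℝ}
    (hq : ∀ e ∈ allPaths, IsCondMeanGiven P X univ (ind (evD D1 D2 e)) (q e))
    (hpos : ∀ e ∈ allPaths, ∀ᵐ ω ∂P, 0 < q e (X ω)) (b : ℝ) (hb : b ∈ ({0, 1} : Set ℝ)) :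
    ∀ᵐ ω ∂P, 0 < P[ind (evD2 D2 b) | m𝓧.comap X] ω :=
  have he := zero_mk_mem_allPaths hb
  condExp_ind_pos_of_subset hX (fun _ hω ↦ hω.2) (measurableSet_evD hD1 hD2 (0, b))
    (measurableSet_evD2 hD2 b) (hq _ he) (hpos _ he)

lemma DID.isCondMeanOn_trend (h : DID P X D1 D2 Y0p Y2p d) (hX : Measurable X)
    (hA : MeasurableSet (evD D1 D2 d)) (hY : Integrable (Y2p (0, 0) - Y0p (0, 0)) P) :
    IsCondMeanOn P (m𝓧.comap X) (evD D1 D2 d) (Y2p (0, 0) - Y0p (0, 0))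
      P[Y2p (0, 0) - Y0p (0, 0) | m𝓧.comap X] := by
  obtain ⟨-, tr, htr, htr_d⟩ := h
  exact (htr_d.isCondMeanOn hX hA hY).congr_ae (htr.condExp_ae_eq hX hY).symm

lemma DID.isCondMeanOn_anticipation (h : DID P X D1 D2 Y0p Y2p d) (hX : Measurable X)
    (hA : MeasurableSet (evD D1 D2 d)) (hd : Integrable (Y0p d) P)
    (h0 : Integrable (Y0p (0, 0)) P) :
    IsCondMeanOn P (m𝓧.comap X) (evD D1 D2 d) (Y0p (0, 0) - Y0p d) 0 := by
  have hd' := integrable_ind_mul hA hd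
  have h0' := integrable_ind_mul hA h0
  have heq := condExp_comap_ae_eq_of_forall_integral_mul_eq hX hd' h0' h.1
  unfold IsCondMeanOn
  rw [mul_sub, mul_zero]
  filter_upwards [condExp_sub h0' hd' (m𝓧.comap X), heq] with ω hsub hω
  rw [hsub, Pi.sub_apply, hω, sub_self, Pi.zero_apply]

lemma DID.isCondMeanOn_untreated (h : DID P X D1 D2 Y0p Y2p d) (hX : Measurable X)
    (hA : MeasurableSet (evD D1 D2 d)) (hd : Integrable (Y0p d) P)
    (h0 : Integrable (Y0p (0, 0)) P) (h2 : Integrable (Y2p (0, 0)) P) :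
    IsCondMeanOn P (m𝓧.comap X) (evD D1 D2 d) (Y2p (0, 0) - Y0p d)
      P[Y2p (0, 0) - Y0p (0, 0) | m𝓧.comap X] := by
  simpa only [sub_add_sub_cancel, add_zero] using
    (h.isCondMeanOn_trend hX hA (h2.sub h0)).add
      (h.isCondMeanOn_anticipation hX hA hd h0) hA (h2.sub h0) (h0.sub hd)

lemma isCondMeanOn_trend_control (hX : Measurable X) (hD1 : Measurable D1) (hD2 : Measurable D2)
    (hD1v : ∀ ω, D1 ω = 0 ∨ D1 ω = 1) (hD2v : ∀ ω, D2 ω = 0 ∨ D2 ω = 1)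
    (hDID : ∀ d ∈ threePaths, DID P X D1 D2 Y0p Y2p d)
    (hY : Integrable (Y2p (0, 0) - Y0p (0, 0)) P) :
    IsCondMeanOn P (m𝓧.comap X) (evD D1 D2 (0, 0)) (Y2p (0, 0) - Y0p (0, 0))
      P[Y2p (0, 0) - Y0p (0, 0) | m𝓧.comap X] := by
  have hA := measurableSet_evD hD1 hD2
  have hB := measurableSet_evD2 hD2
  have htreated d (hd : d ∈ threePaths) := (hDID d hd).isCondMeanOn_trend hX (hA d) hY
  have hfinal_one := (htreated (1, 1) (by simp [threePaths])).union
    (htreated (0, 1) (by simp [threePaths])) (disjoint_evD (by simp)) (hA _) (hA _) hY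
  rw [← evD2_eq_union hD1v] at hfinal_one
  have hfinal_zero := (IsCondMeanOn.univ_condExp hX.comap_le _).sdiff hfinal_one
    (subset_univ _) .univ (hB 1) hY
  rw [← evD2_zero_eq_sdiff hD2v] at hfinal_zero
  rw [evD_zero_eq_sdiff hD1v]
  exact hfinal_zero.sdiff (htreated (1, 0) (by simp [threePaths])) (fun _ hω ↦ hω.2)
    (hB 0) (hA _) hY

lemma isCondMeanOn_untreated_evD (hX : Measurable X) (hD1 : Measurable D1)
    (hD2 : Measurable D2) (hD1v : ∀ ω, D1 ω = 0 ∨ D1 ω = 1) (hD2v : ∀ ω, D2 ω = 0 ∨ D2 ω = 1)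
    (hY0p : ∀ e ∈ allPaths, Integrable (Y0p e) P) (hY2p : Integrable (Y2p (0, 0)) P)
    (hDID : ∀ d ∈ threePaths, DID P X D1 D2 Y0p Y2p d) (hd : d ∈ allPaths) :
    IsCondMeanOn P (m𝓧.comap X) (evD D1 D2 d) (Y2p (0, 0) - Y0p d)
      P[Y2p (0, 0) - Y0p (0, 0) | m𝓧.comap X] := by
  have h0 : Integrable (Y0p (0, 0)) P := hY0p _ (by simp [allPaths])
  by_cases hd0 : d = (0, 0)
  · rw [hd0]
    exact isCondMeanOn_trend_control hX hD1 hD2 hD1v hD2v hDID (hY2p.sub h0)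
  · have hd3 : d ∈ threePaths := by
      simp only [allPaths, threePaths, mem_insert_iff, mem_singleton_iff] at hd ⊢
      tauto
    exact (hDID d hd3).isCondMeanOn_untreated hX (measurableSet_evD hD1 hD2 d)
      (hY0p d hd) h0 hY2p

lemma isCondMeanOn_untreated_evD2 (hX : Measurable X) (hD1 : Measurable D1)
    (hD2 : Measurable D2) (hD1v : ∀ ω, D1 ω = 0 ∨ D1 ω = 1) (hD2v : ∀ ω, D2 ω = 0 ∨ D2 ω = 1)
    (hY0i : Integrable Y0 P) (hY0p : ∀ e ∈ allPaths, Integrable (Y0p e) P)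
    (hY2p : Integrable (Y2p (0, 0)) P) (hcons0 : ∀ ω, Y0 ω = Y0p (D1 ω, D2 ω) ω)
    (hDID : ∀ d ∈ threePaths, DID P X D1 D2 Y0p Y2p d) {b : ℝ} (hb : b ∈ ({0, 1} : Set ℝ)) :
    IsCondMeanOn P (m𝓧.comap X) (evD2 D2 b) (Y2p (0, 0) - Y0)
      P[Y2p (0, 0) - Y0p (0, 0) | m𝓧.comap X] := by
  have hpath (a : ℝ) (hab : (a, b) ∈ allPaths) :
      IsCondMeanOn P (m𝓧.comap X) (evD D1 D2 (a, b)) (Y2p (0, 0) - Y0)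
        P[Y2p (0, 0) - Y0p (0, 0) | m𝓧.comap X] := by
    refine (isCondMeanOn_untreated_evD hX hD1 hD2 hD1v hD2v hY0p hY2p hDID hab).congr ?_
    rintro ω ⟨rfl, rfl⟩
    rw [Pi.sub_apply, Pi.sub_apply, hcons0]
  have hA := measurableSet_evD hD1 hD2
  rw [evD2_eq_union hD1v]
  exact (hpath 1 (one_mk_mem_allPaths hb)).union
    (hpath 0 (zero_mk_mem_allPaths hb))
    (disjoint_evD (by simp)) (hA _) (hA _) (hY2p.sub hY0i)

lemma isCondMeanOn_evD2_effect (hX : Measurable X) (hD1 : Measurable D1) (hD2 : Measurable D2)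
    {a b : ℝ} {Z : Ω → ℝ} (hZ : Integrable Z P) {g p : 𝓧 → ℝ}
    (hg : IsCondMeanGiven P X (evD D1 D2 (a, b)) Z g)
    (hp : IsCondMeanGiven P X (evD2 D2 b) (ind {ω | D1 ω = a}) p) :
    IsCondMeanOn P (m𝓧.comap X) (evD2 D2 b) (ind {ω | D1 ω = a} * Z) (p ∘ X * g ∘ X) :=
  (hg.isCondMeanOn hX (measurableSet_evD hD1 hD2 _) hZ).tower
    (hp.isCondMeanOn hX (measurableSet_evD2 hD2 b)
      (integrable_ind (hD1 (measurableSet_singleton a))))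

lemma isCondMeanOn_evD2_one_effect (hX : Measurable X) (hD1 : Measurable D1)
    (hD2 : Measurable D2) (hD1v : ∀ ω, D1 ω = 0 ∨ D1 ω = 1)
    (hY2p : ∀ e ∈ allPaths, Integrable (Y2p e) P) (hcons2 : ∀ ω, Y2 ω = Y2p (D1 ω, D2 ω) ω)
    {g11 g01 p11 p01 : 𝓧 → ℝ}
    (hg11 : IsCondMeanGiven P X (evD D1 D2 (1, 1)) (Y2p (1, 1) - Y2p (0, 0)) g11)
    (hg01 : IsCondMeanGiven P X (evD D1 D2 (0, 1)) (Y2p (0, 1) - Y2p (0, 0)) g01)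
    (hp11 : IsCondMeanGiven P X (evD2 D2 1) (ind {ω | D1 ω = 1}) p11)
    (hp01 : IsCondMeanGiven P X (evD2 D2 1) (ind {ω | D1 ω = 0}) p01) :
    IsCondMeanOn P (m𝓧.comap X) (evD2 D2 1) (Y2 - Y2p (0, 0))
      (p11 ∘ X * g11 ∘ X + p01 ∘ X * g01 ∘ X) := by
  have hZ (a : ℝ) (ha : (a, 1) ∈ allPaths) : Integrable (Y2p (a, 1) - Y2p (0, 0)) P :=
    (hY2p _ ha).sub (hY2p _ (by simp [allPaths]))
  have hA (a : ℝ) : MeasurableSet {ω | D1 ω = a} := hD1 (measurableSet_singleton a)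
  have hZ1 := hZ 1 (by simp [allPaths])
  have hZ0 := hZ 0 (by simp [allPaths])
  refine ((isCondMeanOn_evD2_effect hX hD1 hD2 hZ1 hg11 hp11).add
    (isCondMeanOn_evD2_effect hX hD1 hD2 hZ0 hg01 hp01) (measurableSet_evD2 hD2 1)
    (integrable_ind_mul (hA 1) hZ1) (integrable_ind_mul (hA 0) hZ0)).congr fun ω hω ↦ ?_
  have hD2ω : D2 ω = 1 := hω
  rcases hD1v ω with h | h <;> simp [ind, hcons2, h, hD2ω]

lemma isCondMeanOn_evD2_zero_effect (hX : Measurable X) (hD1 : Measurable D1)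
    (hD2 : Measurable D2) (hD1v : ∀ ω, D1 ω = 0 ∨ D1 ω = 1)
    (hY2p : ∀ e ∈ allPaths, Integrable (Y2p e) P) (hcons2 : ∀ ω, Y2 ω = Y2p (D1 ω, D2 ω) ω)
    {g10 p10 : 𝓧 → ℝ}
    (hg10 : IsCondMeanGiven P X (evD D1 D2 (1, 0)) (Y2p (1, 0) - Y2p (0, 0)) g10)
    (hp10 : IsCondMeanGiven P X (evD2 D2 0) (ind {ω | D1 ω = 1}) p10) :
    IsCondMeanOn P (m𝓧.comap X) (evD2 D2 0) (Y2 - Y2p (0, 0)) (p10 ∘ X * g10 ∘ X) := by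
  have hZ : Integrable (Y2p (1, 0) - Y2p (0, 0)) P :=
    (hY2p _ (by simp [allPaths])).sub (hY2p _ (by simp [allPaths]))
  refine (isCondMeanOn_evD2_effect hX hD1 hD2 hZ hg10 hp10).congr fun ω hω ↦ ?_
  have hD2ω : D2 ω = 0 := hω
  rcases hD1v ω with h | h <;> simp [ind, hcons2, h, hD2ω]

end DifferenceInDifferences

theorem statement_15_general
    [MeasurableSpace Ω] [m𝓧 : MeasurableSpace 𝓧]
    {P : Measure Ω} [IsFiniteMeasure P]
    {X : Ω → 𝓧} (hX : Measurable X)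
    {Y0 Y2 D1 D2 : Ω → ℝ}
    (hD1 : Measurable D1) (hD2 : Measurable D2)
    (hY0i : Integrable Y0 P) (hY2i : Integrable Y2 P)
    (hD1v : ∀ ω, D1 ω = 0 ∨ D1 ω = 1) (hD2v : ∀ ω, D2 ω = 0 ∨ D2 ω = 1)
    {Y0p Y2p : ℝ × ℝ → Ω → ℝ}
    (hY0p : ∀ e ∈ allPaths, Integrable (Y0p e) P)
    (hY2p : ∀ e ∈ allPaths, Integrable (Y2p e) P)
    (hcons0 : ∀ ω, Y0 ω = Y0p (D1 ω, D2 ω) ω)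
    (hcons2 : ∀ ω, Y2 ω = Y2p (D1 ω, D2 ω) ω)
    (hDID : ∀ d ∈ threePaths, DID P X D1 D2 Y0p Y2p d)
    (hpos : ∀ b ∈ ({0, 1} : Set ℝ), ∀ᵐ ω ∂P, 0 < P[ind (evD2 D2 b) | m𝓧.comap X] ω)
    {m1 m0 : 𝓧 → ℝ}
    (hm1 : IsCondMeanGiven P X (evD2 D2 1) (Y2 - Y0) m1)
    (hm0 : IsCondMeanGiven P X (evD2 D2 0) (Y2 - Y0) m0)
    {g11 g01 g10 : 𝓧 → ℝ}
    (hg11 : IsCondMeanGiven P X (evD D1 D2 (1, 1)) (Y2p (1, 1) - Y2p (0, 0)) g11)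
    (hg01 : IsCondMeanGiven P X (evD D1 D2 (0, 1)) (Y2p (0, 1) - Y2p (0, 0)) g01)
    (hg10 : IsCondMeanGiven P X (evD D1 D2 (1, 0)) (Y2p (1, 0) - Y2p (0, 0)) g10)
    {p11 p01 p10 : 𝓧 → ℝ}
    (hp11 : IsCondMeanGiven P X (evD2 D2 1) (ind {ω | D1 ω = 1}) p11)
    (hp01 : IsCondMeanGiven P X (evD2 D2 1) (ind {ω | D1 ω = 0}) p01)
    (hp10 : IsCondMeanGiven P X (evD2 D2 0) (ind {ω | D1 ω = 1}) p10) :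
    ∀ᵐ ω ∂P,
      m1 (X ω) - m0 (X ω)
        = g11 (X ω) * p11 (X ω) + g01 (X ω) * p01 (X ω) - g10 (X ω) * p10 (X ω) := by
  have hB := measurableSet_evD2 hD2
  have h2 : Integrable (Y2p (0, 0)) P := hY2p _ (by simp [allPaths])
  have huntreated {b : ℝ} (hb : b ∈ ({0, 1} : Set ℝ)) :=
    isCondMeanOn_untreated_evD2 hX hD1 hD2 hD1v hD2v hY0i hY0p h2 hcons0 hDID hb
  have hm1_eq := hm1.ae_eq_of_isCondMeanOn_add hX (hB 1) (hpos 1 (by simp))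
    (isCondMeanOn_evD2_one_effect hX hD1 hD2 hD1v hY2p hcons2 hg11 hg01 hp11 hp01)
    (huntreated (by simp)) hY2i h2 hY0i
  have hm0_eq := hm0.ae_eq_of_isCondMeanOn_add hX (hB 0) (hpos 0 (by simp))
    (isCondMeanOn_evD2_zero_effect hX hD1 hD2 hD1v hY2p hcons2 hg10 hp10)
    (huntreated (by simp)) hY2i h2 hY0i
  filter_upwards [hm1_eq, hm0_eq] with ω hω1 hω0
  simp only [Function.comp_apply, Pi.add_apply, Pi.mul_apply] at hω1 hω0
  rw [hω1, hω0]
  ring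

/-- The conditional decomposition underlying Proposition 1. -/
theorem statement_15
    [MeasurableSpace Ω] [m𝓧 : MeasurableSpace 𝓧]
    (P : Measure Ω) [IsProbabilityMeasure P]
    (X : Ω → 𝓧) (hX : Measurable X)
    (Y0 Y2 D1 D2 : Ω → ℝ)
    (hY0 : Measurable Y0) (hY2 : Measurable Y2)
    (hD1 : Measurable D1) (hD2 : Measurable D2)
    (hY0i : Integrable Y0 P) (hY2i : Integrable Y2 P)
    (hD1v : ∀ ω, D1 ω = 0 ∨ D1 ω = 1) (hD2v : ∀ ω, D2 ω = 0 ∨ D2 ω = 1)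
    (Y0p Y2p : ℝ × ℝ → Ω → ℝ)
    (hY0p : ∀ e ∈ allPaths, Measurable (Y0p e) ∧ Integrable (Y0p e) P)
    (hY2p : ∀ e ∈ allPaths, Measurable (Y2p e) ∧ Integrable (Y2p e) P)
    (hcons0 : ∀ ω, Y0 ω = Y0p (D1 ω, D2 ω) ω)
    (hcons2 : ∀ ω, Y2 ω = Y2p (D1 ω, D2 ω) ω)
    (hDID : ∀ d ∈ threePaths, DID P X D1 D2 Y0p Y2p d)
    (pP : ℝ × ℝ → 𝓧 → ℝ)
    (hpP : ∀ e ∈ allPaths, IsCondMeanGiven P X Set.univ (ind (evD D1 D2 e)) (pP e))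
    (hpPpos : ∀ e ∈ allPaths, ∀ᵐ ω ∂P, 0 < pP e (X ω))
    (m1 m0 : 𝓧 → ℝ)
    (hm1 : IsCondMeanGiven P X (evD2 D2 1) (fun ω => Y2 ω - Y0 ω) m1)
    (hm0 : IsCondMeanGiven P X (evD2 D2 0) (fun ω => Y2 ω - Y0 ω) m0)
    (g11 g01 g10 : 𝓧 → ℝ)
    (hg11 : IsCondMeanGiven P X (evD D1 D2 (1, 1))
        (fun ω => Y2p (1, 1) ω - Y2p (0, 0) ω) g11)
    (hg01 : IsCondMeanGiven P X (evD D1 D2 (0, 1))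
        (fun ω => Y2p (0, 1) ω - Y2p (0, 0) ω) g01)
    (hg10 : IsCondMeanGiven P X (evD D1 D2 (1, 0))
        (fun ω => Y2p (1, 0) ω - Y2p (0, 0) ω) g10)
    (p11 p01 p10 : 𝓧 → ℝ)
    (hp11 : IsCondMeanGiven P X (evD2 D2 1) (ind {ω | D1 ω = 1}) p11)
    (hp01 : IsCondMeanGiven P X (evD2 D2 1) (ind {ω | D1 ω = 0}) p01)
    (hp10 : IsCondMeanGiven P X (evD2 D2 0) (ind {ω | D1 ω = 1}) p10) :
    ∀ᵐ ω ∂P,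
      m1 (X ω) - m0 (X ω)
        = g11 (X ω) * p11 (X ω) + g01 (X ω) * p01 (X ω) - g10 (X ω) * p10 (X ω) := by
  exact statement_15_general hX hD1 hD2 hY0i hY2i hD1v hD2v (fun e he ↦ (hY0p e he).2)
    (fun e he ↦ (hY2p e he).2) hcons0 hcons2 hDID (condExp_ind_evD2_pos hX hD1 hD2 hpP hpPpos)
    hm1 hm0 hg11 hg01 hg10 hp11 hp01 hp10

end DIDMissing
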